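/- Fix ρ ∈ (0,1) and ν ∈ ℝ. For the quantum walk driven by the matrix V alone (without the flip U_f), for every real number x, lim_{t→∞} Σ_{y ∈ ℤ, y ≤ x·t} P(X_t = y) = ∫_{−∞}^{x} g(y) dy, where g(y) = ρ·Δ(y) / (π(1−y²)√(ρ₀²−y²)) for y ∈ (−ρ₀, ρ₀) and g(y) = 0 otherwise, with Δ(y) = 1 + {|α|² − |β|² − (2ρ/ρ₀)(Re(α·conj(β))cos ν + Im(α·conj(β))sin ν)}·y. -/

import Mathlib

open Real Filter Topology MeasureTheory

noncomputable section

/-- `ρ₀ = √(1-ρ²)`. -/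
def rz (ρ : ℝ) : ℝ := Real.sqrt (1 - ρ ^ 2)

/-- `α₀ = ρ e^{iν}`. -/
def az (ρ ν : ℝ) : ℂ := (ρ : ℂ) * Complex.exp (Complex.I * (ν : ℂ))

/-- `C₋`. -/
def Cm (ρ ν : ℝ) : Matrix (Fin 2) (Fin 2) ℂ :=
  !![0, 0; ((rz ρ : ℝ) : ℂ) * (starRingEnd ℂ) (az ρ ν), (((rz ρ) ^ 2 : ℝ) : ℂ)]

/-- `C₀`. -/
def C0 (ρ ν : ℝ) : Matrix (Fin 2) (Fin 2) ℂ :=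
  !![-((ρ ^ 2 : ℝ) : ℂ), -(az ρ ν) * ((rz ρ : ℝ) : ℂ);
      ((rz ρ : ℝ) : ℂ) * (starRingEnd ℂ) (az ρ ν), -((ρ ^ 2 : ℝ) : ℂ)]

/-- `C₊`. -/
def Cp (ρ ν : ℝ) : Matrix (Fin 2) (Fin 2) ℂ :=
  !![(((rz ρ) ^ 2 : ℝ) : ℂ), -(az ρ ν) * ((rz ρ : ℝ) : ℂ); 0, 0]

/-- The quantum walk driven by the matrix `V` alone. -/
def cwalk (ρ ν : ℝ) (α β : ℂ) : ℕ → ℤ → Fin 2 → ℂ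
  | 0, x => if x = 0 then ![α, β] else 0
  | t + 1, x =>
      (Cm ρ ν).mulVec (cwalk ρ ν α β t (x + 1)) + (C0 ρ ν).mulVec (cwalk ρ ν α β t x)
        + (Cp ρ ν).mulVec (cwalk ρ ν α β t (x - 1))

/-- `P(X_t = x) = ‖Ψ_t(x)‖²`. -/
def cprob (ρ ν : ℝ) (α β : ℂ) (t : ℕ) (x : ℤ) : ℝ :=
  ‖cwalk ρ ν α β t x 0‖ ^ 2 + ‖cwalk ρ ν α β t x 1‖ ^ 2

/-- `Δ(y)`. -/
def Delta (ρ ν : ℝ) (α β : ℂ) (y : ℝ) : ℝ :=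
  1 + (‖α‖ ^ 2 - ‖β‖ ^ 2
    - (2 * ρ / rz ρ) * ((α * (starRingEnd ℂ) β).re * Real.cos ν
        + (α * (starRingEnd ℂ) β).im * Real.sin ν)) * y

/-- The limit density `g` for the walk driven by `V` alone. -/
def densV (ρ ν : ℝ) (α β : ℂ) (y : ℝ) : ℝ :=
  if y ∈ Set.Ioo (-(rz ρ)) (rz ρ) then
    ρ * Delta ρ ν α β y / (π * (1 - y ^ 2) * Real.sqrt ((rz ρ) ^ 2 - y ^ 2))
  else 0

/-! At wave number `2κ` one step of the walk is `cos 2ω + (sin 2ω) N`, where `N² = -1`, `N* = -N`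
and `cos ω = ρ₀ cos κ`, so that `t` steps amount to the rotation by the angle `2tω`. By Parseval
the characteristic function of `X_t / t` at `ξ` is the mean over `κ ∈ [-π/2, π/2]` of the overlap
of the rotated initial states at `κ` and `κ - ξ/(2t)`. Only the phase difference
`2t (ω(κ - ξ/(2t)) - ω(κ))` survives as `t → ∞`; it tends to `-ξω'(κ)`, and dominated convergence
gives the limit `cos(ξω') - sin(ξω') ⟨φ, Nφ⟩` under the mean. Up to an odd function of `κ` this is
`(1 + cω') exp(iξω')`, with `c` the slope of `Δ`, and the substitution `y = ω'(κ)`, which maps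
`(-π/2, π/2)` onto `(-ρ₀, ρ₀)`, turns the mean into the Fourier transform of the density `g`.
Lévy's continuity theorem concludes, since the limit law has no atoms. -/

open Complex (I)
open scoped ComplexConjugate InnerProductSpace

section Cis

variable {A : Type*} [Ring A] [Algebra ℂ A] {J : A}

/-- `cos θ + J sin θ`, that is `exp (θ J)` when `J² = -1`. -/
def cis (J : A) (θ : ℝ) : A := (Real.cos θ : ℂ) • 1 + (Real.sin θ : ℂ) • J

lemma cis_add (hJ : J * J = -1) (a b : ℝ) : cis J (a + b) = cis J a * cis J b := by
  simp only [cis, Real.cos_add, Real.sin_add, add_mul, mul_add, smul_mul_smul_comm, hJ, one_mul,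
    mul_one]
  push_cast
  module

lemma cis_zero (J : A) : cis J 0 = 1 := by simp [cis]

lemma star_cis [StarRing A] [StarModule ℂ A] (hJ : star J = -J) (θ : ℝ) :
    star (cis J θ) = cis J (-θ) := by
  simp [cis, hJ, ← Complex.cos_conj, ← Complex.sin_conj]

lemma map_cis {B : Type*} [Ring B] [Algebra ℂ B] (f : A →ₐ[ℂ] B) (J : A) (θ : ℝ) :
    f (cis J θ) = cis (f J) θ := by
  simp [cis]

end Cis

section Overlap

lemma tendsto_mul_sub_of_hasDerivAt {ω : ℝ → ℝ} {v k : ℝ} (hω : HasDerivAt ω v k) (ξ : ℝ) :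
    Tendsto (fun s : ℝ ↦ s * ω (k - ξ / s) - s * ω k) atTop (𝓝 (-(ξ * v))) := by
  have hline : HasDerivAt (fun h ↦ ω (k - h * ξ)) (-(ξ * v)) 0 := by
    have hk : HasDerivAt (fun h : ℝ ↦ k - h * ξ) (-ξ) 0 := by
      simpa using ((hasDerivAt_id (0 : ℝ)).mul_const ξ).const_sub k
    have hω' : HasDerivAt ω v (k - 0 * ξ) := by simpa using hω
    exact (hω'.comp 0 hk).congr_deriv (by ring)
  have hinv : Tendsto (fun s : ℝ ↦ s⁻¹) atTop (𝓝[≠] 0) :=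
    tendsto_inv_atTop_nhdsGT_zero.mono_right (nhdsGT_le_nhdsNE 0)
  refine (hline.tendsto_slope_zero.comp hinv).congr fun s ↦ ?_
  simp [div_eq_inv_mul, mul_sub]

variable {E : Type*} [NormedAddCommGroup E] [InnerProductSpace ℂ E]

lemma cis_apply (J : E →L[ℂ] E) (θ : ℝ) (φ : E) :
    cis J θ φ = (Real.cos θ : ℂ) • φ + (Real.sin θ : ℂ) • J φ := rfl

lemma continuous_cis_apply {J : ℝ → E →L[ℂ] E} {ω : ℝ → ℝ} {φ : E}
    (hJ : Continuous fun k ↦ J k φ) (hω : Continuous ω) :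
    Continuous fun k ↦ cis (J k) (ω k) φ := by
  simp only [cis_apply]
  fun_prop

variable [CompleteSpace E] {J : E →L[ℂ] E}

lemma inner_cis_apply (hstar : star J = -J) (hJ : J * J = -1) (a b : ℝ) (φ : E) :
    ⟪cis J a φ, cis J b φ⟫_ℂ
      = Real.cos (b - a) * (‖φ‖ : ℂ) ^ 2 + Real.sin (b - a) * ⟪φ, J φ⟫_ℂ := by
  calc ⟪cis J a φ, cis J b φ⟫_ℂ
      = ⟪φ, (star (cis J a) * cis J b) φ⟫_ℂ := by
        rw [ContinuousLinearMap.star_eq_adjoint, mul_apply_eq_comp,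
          ContinuousLinearMap.adjoint_inner_right]
    _ = ⟪φ, cis J (b - a) φ⟫_ℂ := by
        rw [star_cis hstar, ← cis_add hJ, neg_add_eq_sub]
    _ = _ := by
        rw [cis_apply, inner_add_right, inner_smul_right, inner_smul_right,
          inner_self_eq_norm_sq_to_K]
        rfl

lemma norm_cis_apply (hstar : star J = -J) (hJ : J * J = -1) (θ : ℝ) (φ : E) :
    ‖cis J θ φ‖ = ‖φ‖ := by
  have h := inner_cis_apply hstar hJ θ θ φ
  rw [sub_self, Real.cos_zero, Real.sin_zero, inner_self_eq_norm_sq_to_K] at h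
  have h' : ‖cis J θ φ‖ ^ 2 = ‖φ‖ ^ 2 := by
    simpa [← Complex.ofReal_pow] using h
  exact (sq_eq_sq₀ (norm_nonneg _) (norm_nonneg _)).1 h'

lemma tendsto_inner_cis_sub_cis_apply {J : ℝ → E →L[ℂ] E} (hstar : ∀ k, star (J k) = -J k)
    (hJ : ∀ k, J k * J k = -1) {φ : E} {k ξ : ℝ} (hcont : ContinuousAt (fun k ↦ J k φ) k)
    (a b : ℝ → ℝ) :
    Tendsto (fun s : ℝ ↦ ⟪cis (J k) (a s) φ,
      cis (J (k - ξ / s)) (b s) φ - cis (J k) (b s) φ⟫_ℂ) atTop (𝓝 0) := by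
  have hk : Tendsto (fun s : ℝ ↦ k - ξ / s) atTop (𝓝 k) := by
    simpa using (tendsto_const_nhds (x := ξ)).div_atTop tendsto_id |>.const_sub k
  have hJφ : Tendsto (fun s : ℝ ↦ ‖φ‖ * ‖J (k - ξ / s) φ - J k φ‖) atTop (𝓝 0) := by
    simpa using ((hcont.tendsto.comp hk).sub_const (J k φ)).norm.const_mul ‖φ‖
  refine squeeze_zero_norm (fun s ↦ ?_) hJφ
  have hdiff : cis (J (k - ξ / s)) (b s) φ - cis (J k) (b s) φ
      = (Real.sin (b s) : ℂ) • (J (k - ξ / s) φ - J k φ) := by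
    simp only [cis_apply]
    module
  calc _ ≤ ‖cis (J k) (a s) φ‖ * ‖cis (J (k - ξ / s)) (b s) φ - cis (J k) (b s) φ‖ :=
        norm_inner_le_norm _ _
    _ = ‖φ‖ * (|Real.sin (b s)| * ‖J (k - ξ / s) φ - J k φ‖) := by
        rw [norm_cis_apply (hstar k) (hJ k), hdiff, norm_smul, Complex.norm_real,
          Real.norm_eq_abs]
    _ ≤ ‖φ‖ * ‖J (k - ξ / s) φ - J k φ‖ := by
        gcongr
        exact mul_le_of_le_one_left (norm_nonneg _) (Real.abs_sin_le_one _)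

lemma tendsto_inner_cis_apply {J : ℝ → E →L[ℂ] E} (hstar : ∀ k, star (J k) = -J k)
    (hJ : ∀ k, J k * J k = -1) {ω : ℝ → ℝ} {v k : ℝ} (hω : HasDerivAt ω v k) {φ : E}
    (hcont : ContinuousAt (fun k ↦ J k φ) k) (ξ : ℝ) :
    Tendsto (fun s : ℝ ↦ ⟪cis (J k) (s * ω k) φ, cis (J (k - ξ / s)) (s * ω (k - ξ / s)) φ⟫_ℂ)
      atTop (𝓝 (Real.cos (ξ * v) * (‖φ‖ : ℂ) ^ 2 - Real.sin (ξ * v) * ⟪φ, J k φ⟫_ℂ)) := by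
  have hphase := tendsto_mul_sub_of_hasDerivAt hω ξ
  have hcos := ((Complex.continuous_ofReal.comp Real.continuous_cos).tendsto _).comp hphase
  have hsin := ((Complex.continuous_ofReal.comp Real.continuous_sin).tendsto _).comp hphase
  have hmain := (hcos.mul_const ((‖φ‖ : ℂ) ^ 2)).add (hsin.mul_const ⟪φ, J k φ⟫_ℂ)
  have hrest := tendsto_inner_cis_sub_cis_apply hstar hJ (ξ := ξ) hcont
    (fun s ↦ s * ω k) (fun s ↦ s * ω (k - ξ / s))
  convert hmain.add hrest using 2
  · simp only [Function.comp_apply]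
    rw [← inner_cis_apply (hstar k) (hJ k), ← inner_add_right, add_sub_cancel]
  · simp [sub_eq_add_neg]

lemma tendsto_integral_inner_cis_apply {J : ℝ → E →L[ℂ] E} (hstar : ∀ k, star (J k) = -J k)
    (hJ : ∀ k, J k * J k = -1) {ω v : ℝ → ℝ} (hω : ∀ k, HasDerivAt ω (v k) k) {φ : E}
    (hcont : Continuous fun k ↦ J k φ) (ξ a b : ℝ) :
    Tendsto (fun s : ℝ ↦ ∫ k in a..b,
        ⟪cis (J k) (s * ω k) φ, cis (J (k - ξ / s)) (s * ω (k - ξ / s)) φ⟫_ℂ) atTop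
      (𝓝 (∫ k in a..b,
        (Real.cos (ξ * v k) * (‖φ‖ : ℂ) ^ 2 - Real.sin (ξ * v k) * ⟪φ, J k φ⟫_ℂ))) := by
  have hω_cont : Continuous ω := continuous_iff_continuousAt.2 fun k ↦ (hω k).continuousAt
  refine intervalIntegral.tendsto_integral_filter_of_dominated_convergence (fun _ ↦ ‖φ‖ * ‖φ‖)
    (Eventually.of_forall fun s ↦ ?_) (Eventually.of_forall fun s ↦ ae_of_all _ fun k _ ↦ ?_)
    intervalIntegrable_const
    (ae_of_all _ fun k _ ↦ tendsto_inner_cis_apply hstar hJ (hω k) hcont.continuousAt ξ)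
  · have hleft := continuous_cis_apply hcont (hω_cont.const_mul s)
    exact (hleft.inner (hleft.comp (continuous_sub_right _))).aestronglyMeasurable
  · refine (norm_inner_le_norm _ _).trans_eq ?_
    rw [norm_cis_apply (hstar _) (hJ _), norm_cis_apply (hstar _) (hJ _)]

end Overlap

section Fourier

variable {E : Type*} [NormedAddCommGroup E]

lemma hasSum_exp_smul_shift [NormedSpace ℂ E] {f : ℤ → E} {a : E} {c : ℂ}
    (h : HasSum (fun x : ℤ ↦ Complex.exp (c * x) • f x) a) (n : ℤ) :
    HasSum (fun x : ℤ ↦ Complex.exp (c * x) • f (x + n)) (Complex.exp (-(c * n)) • a) := by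
  have hshift := ((Equiv.addRight n).hasSum_iff.2 h).const_smul (Complex.exp (-(c * n)))
  convert hshift using 2 with x
  simp only [Function.comp_apply, Equiv.coe_addRight, smul_smul, ← Complex.exp_add]
  congr 2
  push_cast
  ring

lemma integral_exp_two_mul_I_mul_int (m : ℤ) :
    ∫ κ in (-(π / 2))..(π / 2), Complex.exp (2 * κ * m * I) = if m = 0 then (π : ℂ) else 0 := by
  split_ifs with h
  · simp [h]
  · have hc : (2 * m * I : ℂ) ≠ 0 := by simp [h]
    have hperiod : Complex.exp (2 * m * I * (π / 2 : ℝ))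
        = Complex.exp (2 * m * I * (-(π / 2) : ℝ)) :=
      Complex.exp_eq_exp_iff_exists_int.2 ⟨m, by push_cast; ring⟩
    simp_rw [show ∀ κ : ℝ, (2 * κ * m * I : ℂ) = 2 * m * I * κ from fun κ ↦ by ring]
    rw [integral_exp_mul_complex hc, hperiod, sub_self, zero_div]

lemma integral_inner_sum_exp_smul [InnerProductSpace ℂ E] (S : Finset ℤ) (a b : ℤ → E) :
    ∫ κ in (-(π / 2))..(π / 2), ⟪∑ x ∈ S, Complex.exp (-(2 * κ * I) * x) • a x,
      ∑ y ∈ S, Complex.exp (-(2 * κ * I) * y) • b y⟫_ℂ = π * ∑ x ∈ S, ⟪a x, b x⟫_ℂ := by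
  have hexpand (κ : ℝ) : ⟪∑ x ∈ S, Complex.exp (-(2 * κ * I) * x) • a x,
      ∑ y ∈ S, Complex.exp (-(2 * κ * I) * y) • b y⟫_ℂ
      = ∑ x ∈ S, ∑ y ∈ S, ⟪a x, b y⟫_ℂ * Complex.exp (2 * κ * (x - y : ℤ) * I) := by
    rw [sum_inner]
    refine Finset.sum_congr rfl fun x _ ↦ ?_
    rw [inner_sum]
    refine Finset.sum_congr rfl fun y _ ↦ ?_
    rw [inner_smul_left, inner_smul_right, ← Complex.exp_conj, ← mul_assoc, ← Complex.exp_add,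
      mul_comm]
    congr 2
    simp [Complex.conj_ofNat]
    ring
  simp_rw [hexpand]
  rw [intervalIntegral.integral_finsetSum
    fun x _ ↦ Continuous.intervalIntegrable (by fun_prop) _ _, Finset.mul_sum]
  refine Finset.sum_congr rfl fun x hx ↦ ?_
  rw [intervalIntegral.integral_finsetSum
    fun y _ ↦ Continuous.intervalIntegrable (by fun_prop) _ _]
  simp_rw [intervalIntegral.integral_const_mul, integral_exp_two_mul_I_mul_int, sub_eq_zero]
  simp [hx, mul_comm]

end Fourier

section Symmetrization

lemma integral_symm_eq_zero_of_odd {E : Type*} [NormedAddCommGroup E] [NormedSpace ℝ E] {f : ℝ → E}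
    (hf : ∀ x, f (-x) = -f x) (a : ℝ) : ∫ x in (-a)..a, f x = 0 := by
  have h := intervalIntegral.integral_comp_neg (a := -a) (b := a) f
  simp_rw [hf, neg_neg, intervalIntegral.integral_neg] at h
  have htwice : (2 : ℝ) • ∫ x in (-a)..a, f x = 0 := by
    rw [two_smul]
    nth_rw 1 [← h]
    exact neg_add_cancel _
  exact (smul_eq_zero.1 htwice).resolve_left two_ne_zero

/-- Multiplying out the right-hand side, the two integrands differ by an odd function. -/
lemma integral_cos_add_sin_eq_integral_exp {v h : ℝ → ℝ} (hv : Continuous v) (hh : Continuous h)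
    (hvodd : ∀ x, v (-x) = -v x) (hheven : ∀ x, h (-x) = h x) (c ξ a : ℝ) :
    ∫ x in (-a)..a, (Real.cos (ξ * v x) + Real.sin (ξ * v x) * ((c * v x + h x : ℝ) * I) : ℂ)
      = ∫ x in (-a)..a, ((1 + c * v x : ℝ) : ℂ) * Complex.exp (ξ * v x * I) := by
  rw [← sub_eq_zero, ← intervalIntegral.integral_sub
    (Continuous.intervalIntegrable (by fun_prop) _ _)
    (Continuous.intervalIntegrable (by fun_prop) _ _)]
  refine integral_symm_eq_zero_of_odd (fun x ↦ ?_) a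
  simp only [hvodd, hheven, Complex.exp_mul_I]
  push_cast
  simp only [mul_neg, Complex.cos_neg, Complex.sin_neg]
  ring

end Symmetrization

section Law

variable {ι Ω : Type*} [MeasurableSpace Ω] {s : Finset ι} {w : ι → ℝ}

/-- The finitely supported measure with mass `w i` at the point `p i` for `i ∈ s`. Negative weights
are truncated to `0`. -/
def discreteLaw (s : Finset ι) (w : ι → ℝ) (p : ι → Ω) : Measure Ω :=
  ∑ i ∈ s, ENNReal.ofReal (w i) • Measure.dirac (p i)

lemma isProbabilityMeasure_discreteLaw (hw : ∀ i ∈ s, 0 ≤ w i) (hsum : ∑ i ∈ s, w i = 1)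
    (p : ι → Ω) : IsProbabilityMeasure (discreteLaw s w p) := by
  constructor
  simp [discreteLaw, Measure.finsetSum_apply, ← ENNReal.ofReal_sum_of_nonneg hw, hsum]

lemma integral_discreteLaw [MeasurableSingletonClass Ω] {F : Type*} [NormedAddCommGroup F]
    [NormedSpace ℝ F] [CompleteSpace F] (hw : ∀ i ∈ s, 0 ≤ w i) (p : ι → Ω) (f : Ω → F) :
    ∫ x, f x ∂discreteLaw s w p = ∑ i ∈ s, w i • f (p i) := by
  rw [discreteLaw, integral_finsetSum_measure
    fun i _ ↦ (integrable_dirac (by simp [enorm_lt_top])).smul_measure ENNReal.ofReal_ne_top]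
  refine Finset.sum_congr rfl fun i hi ↦ ?_
  rw [integral_smul_measure, integral_dirac, ENNReal.toReal_ofReal (hw i hi)]

lemma measureReal_discreteLaw [MeasurableSingletonClass Ω] (hw : ∀ i ∈ s, 0 ≤ w i) (p : ι → Ω)
    {A : Set Ω} (hA : MeasurableSet A) :
    (discreteLaw s w p).real A = ∑ i ∈ s, A.indicator (fun _ ↦ w i) (p i) := by
  rw [← integral_indicator_one hA, integral_discreteLaw hw]
  exact Finset.sum_congr rfl fun i _ ↦ by by_cases h : p i ∈ A <;> simp [h]

lemma integral_withDensity_ofReal {μ : Measure Ω} {f : Ω → ℝ} (hf : AEMeasurable f μ)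
    (hf₀ : 0 ≤ f) {F : Type*} [NormedAddCommGroup F] [NormedSpace ℝ F] (g : Ω → F) :
    ∫ x, g x ∂μ.withDensity (fun x ↦ ENNReal.ofReal (f x)) = ∫ x, f x • g x ∂μ := by
  rw [integral_withDensity_eq_integral_toReal_smul₀ hf.ennreal_ofReal
    (Eventually.of_forall fun _ ↦ ENNReal.ofReal_lt_top)]
  simp only [ENNReal.toReal_ofReal (hf₀ _)]

lemma measureReal_withDensity_ofReal {μ : Measure Ω} {f : Ω → ℝ} (hf : AEMeasurable f μ)
    (hf₀ : 0 ≤ f) {A : Set Ω} (hA : MeasurableSet A) :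
    (μ.withDensity fun x ↦ ENNReal.ofReal (f x)).real A = ∫ x in A, f x ∂μ := by
  rw [← integral_indicator_one hA, integral_withDensity_ofReal hf hf₀, ← integral_indicator hA]
  congr 1 with x
  by_cases h : x ∈ A <;> simp [h]

lemma isProbabilityMeasure_withDensity_ofReal {μ : Measure Ω} {f : Ω → ℝ} (hf : Integrable f μ)
    (hf₀ : 0 ≤ f) (hint : ∫ x, f x ∂μ = 1) :
    IsProbabilityMeasure (μ.withDensity fun x ↦ ENNReal.ofReal (f x)) := by
  constructor
  rw [withDensity_apply _ MeasurableSet.univ, Measure.restrict_univ,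
    ← ofReal_integral_eq_lintegral_ofReal hf (Eventually.of_forall hf₀), hint, ENNReal.ofReal_one]

lemma tendsto_measureReal_Iic_of_tendsto_charFun {μs : ℕ → Measure ℝ} {μ : Measure ℝ}
    [∀ t, IsProbabilityMeasure (μs t)] [IsProbabilityMeasure μ] [NullSingletonClass μ]
    (h : ∀ ξ, Tendsto (fun t ↦ charFun (μs t) ξ) atTop (𝓝 (charFun μ ξ))) (x : ℝ) :
    Tendsto (fun t ↦ (μs t).real (Set.Iic x)) atTop (𝓝 (μ.real (Set.Iic x))) := by
  have hweak : Tendsto (β := ProbabilityMeasure ℝ) (fun t ↦ ⟨μs t, inferInstance⟩) atTop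
      (𝓝 ⟨μ, inferInstance⟩) := ProbabilityMeasure.tendsto_iff_tendsto_charFun.2 h
  have hnull : μ (frontier (Set.Iic x)) = 0 := by simp
  exact (ENNReal.tendsto_toReal (measure_ne_top μ _)).comp
    (ProbabilityMeasure.tendsto_measure_of_null_frontier_of_tendsto' hweak hnull)

end Law

section Dispersion

variable {r : ℝ}

/-- The frequency `ω ∈ [0, π]` given by the dispersion relation `cos ω = r cos κ` of the walk. -/
def dispersion (r κ : ℝ) : ℝ := Real.arccos (r * Real.cos κ)

/-- The group velocity `dω/dκ`, see `hasDerivAt_dispersion`. -/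
def groupVelocity (r κ : ℝ) : ℝ := r * Real.sin κ / Real.sin (dispersion r κ)

lemma sq_mul_cos_lt_one (hr : |r| < 1) (κ : ℝ) : (r * Real.cos κ) ^ 2 < 1 := by
  rw [mul_pow]
  have := (sq_lt_one_iff_abs_lt_one r).2 hr
  nlinarith [Real.cos_sq_le_one κ, sq_nonneg r]

lemma cos_dispersion (hr : |r| < 1) (κ : ℝ) : Real.cos (dispersion r κ) = r * Real.cos κ := by
  obtain ⟨h₁, h₂⟩ := abs_lt.1 ((sq_lt_one_iff_abs_lt_one _).1 (sq_mul_cos_lt_one hr κ))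
  exact Real.cos_arccos h₁.le h₂.le

lemma sin_dispersion_sq (hr : |r| < 1) (κ : ℝ) :
    Real.sin (dispersion r κ) ^ 2 = 1 - (r * Real.cos κ) ^ 2 := by
  rw [Real.sin_sq, cos_dispersion hr]

lemma sin_dispersion_pos (hr : |r| < 1) (κ : ℝ) : 0 < Real.sin (dispersion r κ) := by
  rw [dispersion, Real.sin_arccos]
  exact Real.sqrt_pos.2 (sub_pos.2 (sq_mul_cos_lt_one hr κ))

lemma continuous_dispersion (r : ℝ) : Continuous (dispersion r) := by
  unfold dispersion
  fun_prop

lemma hasDerivAt_dispersion (hr : |r| < 1) (κ : ℝ) :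
    HasDerivAt (dispersion r) (groupVelocity r κ) κ := by
  obtain ⟨h₁, h₂⟩ := abs_lt.1 ((sq_lt_one_iff_abs_lt_one _).1 (sq_mul_cos_lt_one hr κ))
  have h := (Real.hasDerivAt_arccos h₁.ne' h₂.ne).comp κ ((Real.hasDerivAt_cos κ).const_mul r)
  refine h.congr_deriv ?_
  rw [groupVelocity, dispersion, Real.sin_arccos]
  ring

lemma dispersion_neg (r κ : ℝ) : dispersion r (-κ) = dispersion r κ := by
  simp [dispersion]

lemma groupVelocity_neg (r κ : ℝ) : groupVelocity r (-κ) = -groupVelocity r κ := by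
  simp [groupVelocity, dispersion_neg, neg_div]

lemma groupVelocity_pi_div_two (r : ℝ) : groupVelocity r (π / 2) = r := by
  simp [groupVelocity, dispersion]

lemma continuous_groupVelocity (hr : |r| < 1) : Continuous (groupVelocity r) :=
  (by fun_prop : Continuous fun κ ↦ r * Real.sin κ).div
    (Real.continuous_sin.comp (continuous_dispersion r)) fun κ ↦ (sin_dispersion_pos hr κ).ne'

lemma hasDerivAt_groupVelocity (hr : |r| < 1) (κ : ℝ) :
    HasDerivAt (groupVelocity r)
      (r * (1 - r ^ 2) * Real.cos κ / Real.sin (dispersion r κ) ^ 3) κ := by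
  have hpos := sin_dispersion_pos hr κ
  refine (((Real.hasDerivAt_sin κ).const_mul r).div (hasDerivAt_dispersion hr κ).sin
    hpos.ne').congr_deriv ?_
  rw [groupVelocity, cos_dispersion hr]
  field_simp
  rw [sin_dispersion_sq hr, mul_pow, Real.sin_sq]
  ring

lemma one_sub_groupVelocity_sq (hr : |r| < 1) (κ : ℝ) :
    1 - groupVelocity r κ ^ 2 = (1 - r ^ 2) / Real.sin (dispersion r κ) ^ 2 := by
  have hpos := sin_dispersion_pos hr κ
  rw [groupVelocity]
  field_simp
  rw [sin_dispersion_sq hr, mul_pow, Real.sin_sq]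
  ring

lemma sq_sub_groupVelocity_sq (hr : |r| < 1) (κ : ℝ) :
    r ^ 2 - groupVelocity r κ ^ 2
      = r ^ 2 * (1 - r ^ 2) * Real.cos κ ^ 2 / Real.sin (dispersion r κ) ^ 2 := by
  have hpos := sin_dispersion_pos hr κ
  rw [groupVelocity]
  field_simp
  rw [sin_dispersion_sq hr, mul_pow, Real.sin_sq]
  ring

lemma strictMonoOn_groupVelocity (hr₀ : 0 < r) (hr : |r| < 1) :
    StrictMonoOn (groupVelocity r) (Set.Icc (-(π / 2)) (π / 2)) := by
  refine strictMonoOn_of_deriv_pos (convex_Icc _ _) (continuous_groupVelocity hr).continuousOn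
    fun κ hκ ↦ ?_
  rw [interior_Icc] at hκ
  rw [(hasDerivAt_groupVelocity hr κ).deriv]
  have hcos := Real.cos_pos_of_mem_Ioo hκ
  have hsin := sin_dispersion_pos hr κ
  have hr' : 0 < 1 - r ^ 2 := sub_pos.2 ((sq_lt_one_iff_abs_lt_one r).2 hr)
  positivity

lemma image_groupVelocity_Ioo (hr₀ : 0 < r) (hr : |r| < 1) :
    groupVelocity r '' Set.Ioo (-(π / 2)) (π / 2) = Set.Ioo (-r) r := by
  have hle : -(π / 2) ≤ π / 2 := by linarith [Real.pi_pos]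
  have hleft : groupVelocity r (-(π / 2)) = -r := by
    rw [groupVelocity_neg, groupVelocity_pi_div_two]
  have hsurj := intermediate_value_Ioo hle (continuous_groupVelocity hr).continuousOn
  rw [hleft, groupVelocity_pi_div_two] at hsurj
  refine Set.Subset.antisymm ?_ hsurj
  have hmaps := (strictMonoOn_groupVelocity hr₀ hr).mapsTo_Ioo
  rw [hleft, groupVelocity_pi_div_two] at hmaps
  exact hmaps.image_subset

lemma integral_Ioo_eq_integral_groupVelocity {F : Type*} [NormedAddCommGroup F] [NormedSpace ℝ F]
    (hr₀ : 0 < r) (hr : |r| < 1) (f : ℝ → F) :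
    ∫ y in Set.Ioo (-r) r, f y = ∫ κ in Set.Ioo (-(π / 2)) (π / 2),
      (r * (1 - r ^ 2) * Real.cos κ / Real.sin (dispersion r κ) ^ 3) • f (groupVelocity r κ) := by
  rw [← image_groupVelocity_Ioo hr₀ hr]
  exact integral_image_eq_integral_deriv_smul_of_monotoneOn measurableSet_Ioo
    (fun κ _ ↦ (hasDerivAt_groupVelocity hr κ).hasDerivWithinAt)
    ((strictMonoOn_groupVelocity hr₀ hr).monotoneOn.mono Set.Ioo_subset_Icc_self) f

lemma integrableOn_Ioo_iff_integrableOn_groupVelocity {F : Type*} [NormedAddCommGroup F]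
    [NormedSpace ℝ F] (hr₀ : 0 < r) (hr : |r| < 1) (f : ℝ → F) :
    IntegrableOn f (Set.Ioo (-r) r) ↔ IntegrableOn (fun κ ↦
      (r * (1 - r ^ 2) * Real.cos κ / Real.sin (dispersion r κ) ^ 3) • f (groupVelocity r κ))
      (Set.Ioo (-(π / 2)) (π / 2)) := by
  rw [← image_groupVelocity_Ioo hr₀ hr]
  exact integrableOn_image_iff_integrableOn_deriv_smul_of_monotoneOn measurableSet_Ioo
    (fun κ _ ↦ (hasDerivAt_groupVelocity hr κ).hasDerivWithinAt)
    ((strictMonoOn_groupVelocity hr₀ hr).monotoneOn.mono Set.Ioo_subset_Icc_self) f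

end Dispersion

section Walk

variable {ρ : ℝ}

lemma rz_sq (hρ : ρ ∈ Set.Ioo (0 : ℝ) 1) : rz ρ ^ 2 = 1 - ρ ^ 2 :=
  Real.sq_sqrt (by nlinarith [hρ.1, hρ.2])

lemma rz_pos (hρ : ρ ∈ Set.Ioo (0 : ℝ) 1) : 0 < rz ρ :=
  Real.sqrt_pos.2 (by nlinarith [hρ.1, hρ.2])

lemma abs_rz_lt_one (hρ : ρ ∈ Set.Ioo (0 : ℝ) 1) : |rz ρ| < 1 := by
  rw [← sq_lt_one_iff_abs_lt_one, rz_sq hρ]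
  linarith [pow_pos hρ.1 2]

lemma norm_az (hρ : 0 ≤ ρ) (ν : ℝ) : ‖az ρ ν‖ = ρ := by
  rw [az, mul_comm I, norm_mul, Complex.norm_exp_ofReal_mul_I, mul_one, Complex.norm_real,
    Real.norm_of_nonneg hρ]

/-- The Fourier symbol of one step of the walk at wave number `2 * κ`. -/
def walkSymbol (ρ ν κ : ℝ) : Matrix (Fin 2) (Fin 2) ℂ :=
  Complex.exp (2 * κ * I) • Cm ρ ν + C0 ρ ν + Complex.exp (-(2 * κ * I)) • Cp ρ ν

/-- The skew-Hermitian square root of `-1` about which the Fourier symbol of the walk rotates, see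
`walkSymbol_eq_cis`. -/
def walkAxis (ρ ν κ : ℝ) : Matrix (Fin 2) (Fin 2) ℂ :=
  (Real.sin (dispersion (rz ρ) κ))⁻¹ •
    !![-((rz ρ * Real.sin κ : ℝ) * I), -(az ρ ν * Complex.exp (-(κ * I)));
      conj (az ρ ν * Complex.exp (-(κ * I))), (rz ρ * Real.sin κ : ℝ) * I]

lemma conjTranspose_walkAxis (ρ ν κ : ℝ) : (walkAxis ρ ν κ).conjTranspose = -walkAxis ρ ν κ := by
  ext i j
  fin_cases i <;> fin_cases j <;> simp [walkAxis, -Complex.ofReal_sin, -Complex.ofReal_mul]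

lemma skewHermitian_mul_self (b : ℝ) (z : ℂ) :
    !![-(b * I), -z; conj z, b * I] * !![-(b * I), -z; conj z, b * I]
      = -(b ^ 2 + ‖z‖ ^ 2) • (1 : Matrix (Fin 2) (Fin 2) ℂ) := by
  have hz : z * conj z = (‖z‖ : ℂ) ^ 2 := Complex.mul_conj' z
  rw [Matrix.mul_fin_two, Matrix.one_fin_two]
  ext i j
  fin_cases i <;> fin_cases j <;> simp
  · linear_combination (b : ℂ) ^ 2 * Complex.I_sq - hz
  · ring
  · ring
  · linear_combination (b : ℂ) ^ 2 * Complex.I_sq - hz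

lemma walkAxis_mul_self (hρ : ρ ∈ Set.Ioo (0 : ℝ) 1) (ν κ : ℝ) :
    walkAxis ρ ν κ * walkAxis ρ ν κ = -1 := by
  have hsin := sin_dispersion_pos (abs_rz_lt_one hρ) κ
  have hnorm : ‖az ρ ν * Complex.exp (-(κ * I))‖ = ρ := by
    rw [norm_mul, norm_az hρ.1.le, ← neg_mul, ← Complex.ofReal_neg,
      Complex.norm_exp_ofReal_mul_I, mul_one]
  have hsq : (rz ρ * Real.sin κ) ^ 2 + ρ ^ 2 = Real.sin (dispersion (rz ρ) κ) ^ 2 := by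
    rw [sin_dispersion_sq (abs_rz_lt_one hρ), mul_pow, mul_pow, Real.sin_sq]
    linear_combination rz_sq hρ
  rw [walkAxis, smul_mul_smul_comm, skewHermitian_mul_self, hnorm, hsq, smul_smul, mul_neg,
    ← sq, ← mul_pow, inv_mul_cancel₀ hsin.ne', one_pow, neg_smul, one_smul]

lemma walkSymbol_eq_cis (hρ : ρ ∈ Set.Ioo (0 : ℝ) 1) (ν κ : ℝ) :
    walkSymbol ρ ν κ = cis (walkAxis ρ ν κ) (2 * dispersion (rz ρ) κ) := by
  have hsin_two : Real.sin (2 * dispersion (rz ρ) κ) * (Real.sin (dispersion (rz ρ) κ))⁻¹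
      = 2 * (rz ρ * Real.cos κ) := by
    have hsin := (sin_dispersion_pos (abs_rz_lt_one hρ) κ).ne'
    rw [Real.sin_two_mul, cos_dispersion (abs_rz_lt_one hρ)]
    field_simp
  have hrz : (rz ρ : ℂ) ^ 2 = 1 - ρ ^ 2 := by exact_mod_cast rz_sq hρ
  have hexp_two (z : ℂ) : Complex.exp (2 * z) = Complex.exp z ^ 2 := by
    rw [← Complex.exp_nat_mul]
    rfl
  have hexp : Complex.exp (κ * I) = Complex.cos κ + Complex.sin κ * I := Complex.exp_mul_I κ
  have hexp_neg : Complex.exp (-(κ * I)) = Complex.cos κ - Complex.sin κ * I := by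
    rw [← neg_mul, Complex.exp_mul_I, Complex.cos_neg, Complex.sin_neg, neg_mul, sub_eq_add_neg]
  have hpyth := Complex.sin_sq_add_cos_sq κ
  rw [cis, walkAxis, Complex.coe_smul, Complex.coe_smul, smul_smul, hsin_two, Real.cos_two_mul,
    cos_dispersion (abs_rz_lt_one hρ), walkSymbol, mul_assoc, ← mul_neg, hexp_two, hexp_two, hexp,
    hexp_neg]
  ext i j
  fin_cases i <;> fin_cases j <;>
    simp [Cm, C0, Cp, ← Complex.cos_conj, ← Complex.sin_conj]
  · linear_combination (rz ρ : ℂ) ^ 2 * Complex.sin κ ^ 2 * Complex.I_sq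
      - (rz ρ : ℂ) ^ 2 * hpyth - hrz
  · linear_combination az ρ ν * rz ρ * (hpyth - Complex.sin κ ^ 2 * Complex.I_sq)
  · linear_combination conj (az ρ ν) * rz ρ * (Complex.sin κ ^ 2 * Complex.I_sq - hpyth)
  · linear_combination (rz ρ : ℂ) ^ 2 * Complex.sin κ ^ 2 * Complex.I_sq
      - (rz ρ : ℂ) ^ 2 * hpyth - hrz

/-- `walkAxis` as an operator on the Hilbert space `ℂ²`. -/
def walkAxisCLM (ρ ν κ : ℝ) : EuclideanSpace ℂ (Fin 2) →L[ℂ] EuclideanSpace ℂ (Fin 2) :=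
  Matrix.toEuclideanCLM (𝕜 := ℂ) (walkAxis ρ ν κ)

lemma star_walkAxisCLM (ρ ν κ : ℝ) : star (walkAxisCLM ρ ν κ) = -walkAxisCLM ρ ν κ := by
  rw [walkAxisCLM, ← map_star, Matrix.star_eq_conjTranspose, conjTranspose_walkAxis, map_neg]

lemma walkAxisCLM_mul_self (hρ : ρ ∈ Set.Ioo (0 : ℝ) 1) (ν κ : ℝ) :
    walkAxisCLM ρ ν κ * walkAxisCLM ρ ν κ = -1 := by
  rw [walkAxisCLM, ← map_mul, walkAxis_mul_self hρ, map_neg, map_one]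

lemma toEuclideanCLM_walkSymbol (hρ : ρ ∈ Set.Ioo (0 : ℝ) 1) (ν κ : ℝ) :
    Matrix.toEuclideanCLM (𝕜 := ℂ) (walkSymbol ρ ν κ)
      = cis (walkAxisCLM ρ ν κ) (2 * dispersion (rz ρ) κ) := by
  rw [walkSymbol_eq_cis hρ]
  exact map_cis (Matrix.toEuclideanCLM (n := Fin 2) (𝕜 := ℂ)).toAlgEquiv.toAlgHom _ _

lemma continuous_walkAxisCLM_apply (hρ : ρ ∈ Set.Ioo (0 : ℝ) 1) (ν : ℝ)
    (φ : EuclideanSpace ℂ (Fin 2)) : Continuous fun κ ↦ walkAxisCLM ρ ν κ φ := by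
  have hsin : Continuous fun κ ↦ (Real.sin (dispersion (rz ρ) κ))⁻¹ :=
    (Real.continuous_sin.comp (continuous_dispersion _)).inv₀
      fun κ ↦ (sin_dispersion_pos (abs_rz_lt_one hρ) κ).ne'
  have haxis : Continuous (walkAxis ρ ν) := by
    refine hsin.smul (continuous_matrix fun i j ↦ ?_)
    fin_cases i <;> fin_cases j <;>
      simp only [Fin.zero_eta, Fin.mk_one, Matrix.of_apply, Matrix.cons_val', Matrix.cons_val_zero,
        Matrix.cons_val_one, Matrix.cons_val_fin_one] <;>
      fun_prop
  exact (PiLp.continuous_toLp 2 _).comp (haxis.matrix_mulVec continuous_const)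

/-- The amplitude `Ψ_t(x)` as a vector of the Hilbert space `ℂ²`. -/
def amplitude (ρ ν : ℝ) (α β : ℂ) (t : ℕ) (x : ℤ) : EuclideanSpace ℂ (Fin 2) :=
  WithLp.toLp 2 (cwalk ρ ν α β t x)

lemma cprob_eq_norm_amplitude_sq (ρ ν : ℝ) (α β : ℂ) (t : ℕ) (x : ℤ) :
    cprob ρ ν α β t x = ‖amplitude ρ ν α β t x‖ ^ 2 := by
  simp [EuclideanSpace.norm_sq_eq, cprob, amplitude]

lemma amplitude_succ (ρ ν : ℝ) (α β : ℂ) (t : ℕ) (x : ℤ) :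
    amplitude ρ ν α β (t + 1) x
      = Matrix.toEuclideanCLM (𝕜 := ℂ) (Cm ρ ν) (amplitude ρ ν α β t (x + 1))
        + Matrix.toEuclideanCLM (𝕜 := ℂ) (C0 ρ ν) (amplitude ρ ν α β t x)
        + Matrix.toEuclideanCLM (𝕜 := ℂ) (Cp ρ ν) (amplitude ρ ν α β t (x - 1)) := rfl

lemma amplitude_eq_zero {t : ℕ} {x : ℤ} (ρ ν : ℝ) (α β : ℂ) (hx : x ∉ Finset.Icc (-(t : ℤ)) t) :
    amplitude ρ ν α β t x = 0 := by
  induction t generalizing x with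
  | zero =>
    have hx₀ : x ≠ 0 := by rintro rfl; simp at hx
    simp [amplitude, cwalk, hx₀]
  | succ t ih =>
    simp only [Finset.mem_Icc, not_and_or, not_le] at ih hx
    push_cast at hx
    rw [amplitude_succ, ih (x := x + 1) (by omega), ih (x := x) (by omega),
      ih (x := x - 1) (by omega)]
    simp

lemma hasSum_amplitude (hρ : ρ ∈ Set.Ioo (0 : ℝ) 1) (ν : ℝ) (α β : ℂ) (t : ℕ) (κ : ℝ) :
    HasSum (fun x : ℤ ↦ Complex.exp (-(2 * κ * I) * x) • amplitude ρ ν α β t x)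
      (cis (walkAxisCLM ρ ν κ) (2 * t * dispersion (rz ρ) κ) !₂[α, β]) := by
  induction t with
  | zero =>
    convert hasSum_single (0 : ℤ) fun x hx ↦ ?_ using 1
    · simp [cis_zero, amplitude, cwalk]
    · simp [amplitude, cwalk, hx]
  | succ t ih =>
    have hm := (Matrix.toEuclideanCLM (𝕜 := ℂ) (Cm ρ ν)).hasSum (hasSum_exp_smul_shift ih 1)
    have h0 := (Matrix.toEuclideanCLM (𝕜 := ℂ) (C0 ρ ν)).hasSum ih
    have hp := (Matrix.toEuclideanCLM (𝕜 := ℂ) (Cp ρ ν)).hasSum (hasSum_exp_smul_shift ih (-1))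
    convert (hm.add h0).add hp using 1
    · ext1 x
      simp only [amplitude_succ, smul_add, map_smul]
      rfl
    · have hangle : 2 * ((t + 1 : ℕ) : ℝ) * dispersion (rz ρ) κ
          = 2 * dispersion (rz ρ) κ + 2 * t * dispersion (rz ρ) κ := by push_cast; ring
      rw [hangle, cis_add (walkAxisCLM_mul_self hρ ν κ), ← toEuclideanCLM_walkSymbol hρ]
      simp [walkSymbol]

lemma sum_amplitude (hρ : ρ ∈ Set.Ioo (0 : ℝ) 1) (ν : ℝ) (α β : ℂ) (t : ℕ) (κ : ℝ) :
    ∑ x ∈ Finset.Icc (-(t : ℤ)) t, Complex.exp (-(2 * κ * I) * x) • amplitude ρ ν α β t x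
      = cis (walkAxisCLM ρ ν κ) (2 * t * dispersion (rz ρ) κ) !₂[α, β] := by
  refine (hasSum_sum_of_ne_finset_zero fun x hx ↦ ?_).unique (hasSum_amplitude hρ ν α β t κ)
  rw [amplitude_eq_zero ρ ν α β hx, smul_zero]

lemma sum_cprob_mul_exp (hρ : ρ ∈ Set.Ioo (0 : ℝ) 1) (ν : ℝ) (α β : ℂ) (t : ℕ) (θ : ℝ) :
    ∑ x ∈ Finset.Icc (-(t : ℤ)) t, (cprob ρ ν α β t x : ℂ) * Complex.exp (2 * θ * x * I)
      = (π : ℂ)⁻¹ * ∫ κ in (-(π / 2))..(π / 2),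
        ⟪cis (walkAxisCLM ρ ν κ) (2 * t * dispersion (rz ρ) κ) !₂[α, β],
          cis (walkAxisCLM ρ ν (κ - θ)) (2 * t * dispersion (rz ρ) (κ - θ)) !₂[α, β]⟫_ℂ := by
  have hπ : (π : ℂ) ≠ 0 := Complex.ofReal_ne_zero.2 Real.pi_ne_zero
  have hparseval := integral_inner_sum_exp_smul (Finset.Icc (-(t : ℤ)) t) (amplitude ρ ν α β t)
    fun x ↦ Complex.exp (2 * θ * x * I) • amplitude ρ ν α β t x
  have hshift (κ : ℝ) : ∑ x ∈ Finset.Icc (-(t : ℤ)) t, Complex.exp (-(2 * κ * I) * x) •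
        Complex.exp (2 * θ * x * I) • amplitude ρ ν α β t x
      = cis (walkAxisCLM ρ ν (κ - θ)) (2 * t * dispersion (rz ρ) (κ - θ)) !₂[α, β] := by
    rw [← sum_amplitude hρ]
    refine Finset.sum_congr rfl fun x _ ↦ ?_
    rw [smul_smul, ← Complex.exp_add]
    congr 2
    push_cast
    ring
  simp_rw [hshift, sum_amplitude hρ] at hparseval
  rw [hparseval, inv_mul_cancel_left₀ hπ]
  refine Finset.sum_congr rfl fun x _ ↦ ?_
  rw [inner_smul_right, inner_self_eq_norm_sq_to_K, cprob_eq_norm_amplitude_sq, mul_comm]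
  push_cast
  rfl

lemma norm_initial {α β : ℂ} (hαβ : ‖α‖ ^ 2 + ‖β‖ ^ 2 = 1) : ‖!₂[α, β]‖ = 1 := by
  rw [EuclideanSpace.norm_eq, Real.sqrt_eq_one]
  simpa using hαβ

lemma sum_cprob (hρ : ρ ∈ Set.Ioo (0 : ℝ) 1) (ν : ℝ) {α β : ℂ} (hαβ : ‖α‖ ^ 2 + ‖β‖ ^ 2 = 1)
    (t : ℕ) : ∑ x ∈ Finset.Icc (-(t : ℤ)) t, cprob ρ ν α β t x = 1 := by
  have hπ : (π : ℂ) ≠ 0 := Complex.ofReal_ne_zero.2 Real.pi_ne_zero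
  have h := sum_cprob_mul_exp hρ ν α β t 0
  simp only [sub_zero, inner_self_eq_norm_sq_to_K,
    norm_cis_apply (star_walkAxisCLM ρ ν _) (walkAxisCLM_mul_self hρ ν _)] at h
  have h' : (∑ x ∈ Finset.Icc (-(t : ℤ)) t, cprob ρ ν α β t x : ℂ)
      = ((‖!₂[α, β]‖ ^ 2 : ℝ) : ℂ) := by
    simpa [hπ] using h
  rw [norm_initial hαβ, one_pow] at h'
  exact_mod_cast h'

end Walk

section Density

variable {ρ : ℝ}

/-- The slope of the affine function `Delta`. -/
def drift (ρ ν : ℝ) (α β : ℂ) : ℝ :=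
  ‖α‖ ^ 2 - ‖β‖ ^ 2 - (2 * ρ / rz ρ) * ((α * conj β).re * Real.cos ν + (α * conj β).im * Real.sin ν)

lemma Delta_eq_one_add_drift_mul (ρ ν : ℝ) (α β : ℂ) (y : ℝ) :
    Delta ρ ν α β y = 1 + drift ρ ν α β * y := rfl

lemma drift_mul_rz (hρ : ρ ∈ Set.Ioo (0 : ℝ) 1) (ν : ℝ) (α β : ℂ) :
    drift ρ ν α β * rz ρ = rz ρ * (‖α‖ ^ 2 - ‖β‖ ^ 2) - 2 * (az ρ ν * conj α * β).re := by
  have hr := rz_pos hρ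
  have haz : az ρ ν = ρ * (Real.cos ν + Real.sin ν * I) := by
    rw [az, mul_comm I, Complex.exp_mul_I, Complex.ofReal_cos, Complex.ofReal_sin]
  simp [drift, haz, -Complex.ofReal_cos, -Complex.ofReal_sin]
  field_simp
  ring

lemma inner_skewHermitian (b : ℝ) (z α β : ℂ) :
    ⟪!₂[α, β], Matrix.toEuclideanCLM (𝕜 := ℂ) !![-(b * I), -z; conj z, b * I] !₂[α, β]⟫_ℂ
      = -((b * (‖α‖ ^ 2 - ‖β‖ ^ 2) + 2 * (z * conj α * β).im : ℝ) * I) := by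
  have hα : α * conj α = (‖α‖ : ℂ) ^ 2 := Complex.mul_conj' α
  have hβ : β * conj β = (‖β‖ : ℂ) ^ 2 := Complex.mul_conj' β
  have him := Complex.sub_conj (z * conj α * β)
  simp only [map_mul, Complex.conj_conj] at him
  rw [Matrix.toEuclideanCLM_toLp, PiLp.inner_apply, Fin.sum_univ_two]
  simp [Matrix.mulVec, dotProduct, -Complex.mul_im]
  push_cast at him
  linear_combination -b * I * (hα - hβ) - him

lemma inner_walkAxisCLM (hρ : ρ ∈ Set.Ioo (0 : ℝ) 1) (ν : ℝ) (α β : ℂ) (κ : ℝ) :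
    ⟪!₂[α, β], walkAxisCLM ρ ν κ !₂[α, β]⟫_ℂ
      = -((drift ρ ν α β * groupVelocity (rz ρ) κ + 2 * (az ρ ν * conj α * β).im * Real.cos κ
        / Real.sin (dispersion (rz ρ) κ) : ℝ) * I) := by
  have him : (az ρ ν * Complex.exp (-(κ * I)) * conj α * β).im
      = (az ρ ν * conj α * β).im * Real.cos κ - (az ρ ν * conj α * β).re * Real.sin κ := by
    rw [mul_right_comm _ _ (conj α), mul_right_comm _ _ β, Complex.mul_im, ← neg_mul,
      ← Complex.ofReal_neg, Complex.exp_ofReal_mul_I_re, Complex.exp_ofReal_mul_I_im,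
      Real.cos_neg, Real.sin_neg]
    ring
  have hreal : (Real.sin (dispersion (rz ρ) κ))⁻¹ * (rz ρ * Real.sin κ * (‖α‖ ^ 2 - ‖β‖ ^ 2)
        + 2 * (az ρ ν * Complex.exp (-(κ * I)) * conj α * β).im)
      = drift ρ ν α β * groupVelocity (rz ρ) κ + 2 * (az ρ ν * conj α * β).im * Real.cos κ
        / Real.sin (dispersion (rz ρ) κ) := by
    rw [him, groupVelocity]
    have hsin := (sin_dispersion_pos (abs_rz_lt_one hρ) κ).ne'
    field_simp
    linear_combination -Real.sin κ * drift_mul_rz hρ ν α β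
  rw [walkAxisCLM, walkAxis, ← Complex.coe_smul, map_smul, smul_apply,
    inner_smul_right, inner_skewHermitian, ← hreal]
  push_cast
  ring

/-- Cauchy-Schwarz at `κ = π / 2`, where the group velocity attains its maximum `rz ρ`. -/
lemma abs_drift_mul_rz_le_one (hρ : ρ ∈ Set.Ioo (0 : ℝ) 1) (ν : ℝ) {α β : ℂ}
    (hαβ : ‖α‖ ^ 2 + ‖β‖ ^ 2 = 1) : |drift ρ ν α β * rz ρ| ≤ 1 := by
  have hnorm : ‖walkAxisCLM ρ ν (π / 2) !₂[α, β]‖ = 1 := by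
    have h := norm_cis_apply (star_walkAxisCLM ρ ν (π / 2)) (walkAxisCLM_mul_self hρ ν (π / 2))
      (π / 2) !₂[α, β]
    rwa [cis_apply, Real.cos_pi_div_two, Real.sin_pi_div_two, Complex.ofReal_zero, zero_smul,
      zero_add, Complex.ofReal_one, one_smul, norm_initial hαβ] at h
  have h := norm_inner_le_norm (𝕜 := ℂ) !₂[α, β] (walkAxisCLM ρ ν (π / 2) !₂[α, β])
  rwa [hnorm, norm_initial hαβ, mul_one, inner_walkAxisCLM hρ, groupVelocity_pi_div_two,
    Real.cos_pi_div_two, mul_zero, zero_div, add_zero, norm_neg, norm_mul, Complex.norm_I, mul_one,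
    Complex.norm_real, Real.norm_eq_abs] at h

lemma densV_nonneg (hρ : ρ ∈ Set.Ioo (0 : ℝ) 1) (ν : ℝ) {α β : ℂ}
    (hαβ : ‖α‖ ^ 2 + ‖β‖ ^ 2 = 1) : 0 ≤ densV ρ ν α β := by
  intro y
  rw [densV]
  split_ifs with hy
  · have hy' : |y| ≤ rz ρ := abs_le.2 ⟨hy.1.le, hy.2.le⟩
    have hDelta : 0 ≤ Delta ρ ν α β y := by
      have hle : |drift ρ ν α β * y| ≤ 1 := by
        refine le_trans ?_ (abs_drift_mul_rz_le_one hρ ν hαβ)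
        rw [abs_mul, abs_mul, abs_of_pos (rz_pos hρ)]
        gcongr
      rw [Delta_eq_one_add_drift_mul]
      linarith [(abs_le.1 hle).1]
    have hy_sq : 0 ≤ 1 - y ^ 2 := by
      rw [sub_nonneg, sq_le_one_iff_abs_le_one]
      exact hy'.trans ((le_abs_self _).trans (abs_rz_lt_one hρ).le)
    have := hρ.1
    positivity
  · rfl

lemma jacobian_mul_densV_groupVelocity (hρ : ρ ∈ Set.Ioo (0 : ℝ) 1) (ν : ℝ) (α β : ℂ) {κ : ℝ}
    (hκ : κ ∈ Set.Ioo (-(π / 2)) (π / 2)) :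
    rz ρ * (1 - rz ρ ^ 2) * Real.cos κ / Real.sin (dispersion (rz ρ) κ) ^ 3
        * densV ρ ν α β (groupVelocity (rz ρ) κ)
      = π⁻¹ * (1 + drift ρ ν α β * groupVelocity (rz ρ) κ) := by
  have hr := abs_rz_lt_one hρ
  have hr₀ := rz_pos hρ
  have hρ₀ := hρ.1
  have hcos := Real.cos_pos_of_mem_Ioo hκ
  have hsin := sin_dispersion_pos hr κ
  have hmem : groupVelocity (rz ρ) κ ∈ Set.Ioo (-rz ρ) (rz ρ) :=
    image_groupVelocity_Ioo hr₀ hr ▸ Set.mem_image_of_mem _ hκ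
  have hρ_sq : 1 - rz ρ ^ 2 = ρ ^ 2 := by rw [rz_sq hρ, sub_sub_cancel]
  have hsqrt : Real.sqrt (rz ρ ^ 2 - groupVelocity (rz ρ) κ ^ 2)
      = rz ρ * ρ * Real.cos κ / Real.sin (dispersion (rz ρ) κ) := by
    rw [sq_sub_groupVelocity_sq hr, hρ_sq, ← mul_pow, ← mul_pow, ← div_pow,
      Real.sqrt_sq (by positivity)]
  rw [densV, if_pos hmem, hsqrt, one_sub_groupVelocity_sq hr, hρ_sq, Delta_eq_one_add_drift_mul]
  field_simp

lemma integrable_densV (hρ : ρ ∈ Set.Ioo (0 : ℝ) 1) (ν : ℝ) (α β : ℂ) :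
    Integrable (densV ρ ν α β) := by
  have hsupp : Function.support (densV ρ ν α β) ⊆ Set.Ioo (-rz ρ) (rz ρ) := by
    intro y hy
    by_contra hmem
    exact hy (if_neg hmem)
  have hv := continuous_groupVelocity (abs_rz_lt_one hρ)
  have hcont : Continuous fun κ ↦ π⁻¹ * (1 + drift ρ ν α β * groupVelocity (rz ρ) κ) := by fun_prop
  rw [← integrableOn_iff_integrable_of_support_subset hsupp,
    integrableOn_Ioo_iff_integrableOn_groupVelocity (rz_pos hρ) (abs_rz_lt_one hρ)]
  exact (hcont.integrableOn_Icc.mono_set Set.Ioo_subset_Icc_self).congr_fun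
    (fun κ hκ ↦ (jacobian_mul_densV_groupVelocity hρ ν α β hκ).symm) measurableSet_Ioo

lemma integral_densV_smul (hρ : ρ ∈ Set.Ioo (0 : ℝ) 1) (ν : ℝ) (α β : ℂ) {F : Type*}
    [NormedAddCommGroup F] [NormedSpace ℝ F] (f : ℝ → F) :
    ∫ y, densV ρ ν α β y • f y = π⁻¹ • ∫ κ in (-(π / 2))..(π / 2),
      (1 + drift ρ ν α β * groupVelocity (rz ρ) κ) • f (groupVelocity (rz ρ) κ) := by
  have hle : -(π / 2) ≤ π / 2 := by linarith [Real.pi_pos]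
  rw [← setIntegral_eq_integral_of_forall_compl_eq_zero (s := Set.Ioo (-rz ρ) (rz ρ))
      fun y hy ↦ by rw [densV, if_neg hy, zero_smul],
    integral_Ioo_eq_integral_groupVelocity (rz_pos hρ) (abs_rz_lt_one hρ),
    intervalIntegral.integral_of_le hle, integral_Ioc_eq_integral_Ioo, ← integral_smul]
  refine setIntegral_congr_fun measurableSet_Ioo fun κ hκ ↦ ?_
  simp only [smul_smul, jacobian_mul_densV_groupVelocity hρ ν α β hκ]

lemma integral_densV_smul_exp (hρ : ρ ∈ Set.Ioo (0 : ℝ) 1) (ν : ℝ) {α β : ℂ}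
    (hαβ : ‖α‖ ^ 2 + ‖β‖ ^ 2 = 1) (ξ : ℝ) :
    ∫ y, densV ρ ν α β y • Complex.exp (ξ * y * I) = (π : ℂ)⁻¹ * ∫ κ in (-(π / 2))..(π / 2),
      (Real.cos (ξ * groupVelocity (rz ρ) κ) * (‖!₂[α, β]‖ : ℂ) ^ 2
        - Real.sin (ξ * groupVelocity (rz ρ) κ) * ⟪!₂[α, β], walkAxisCLM ρ ν κ !₂[α, β]⟫_ℂ) := by
  have hr := abs_rz_lt_one hρ
  have heven : Continuous fun κ ↦ 2 * (az ρ ν * conj α * β).im * Real.cos κ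
      / Real.sin (dispersion (rz ρ) κ) :=
    (by fun_prop : Continuous fun κ ↦ 2 * (az ρ ν * conj α * β).im * Real.cos κ).div
      (Real.continuous_sin.comp (continuous_dispersion _)) fun κ ↦ (sin_dispersion_pos hr κ).ne'
  have hsymm := integral_cos_add_sin_eq_integral_exp (continuous_groupVelocity hr) heven
    (groupVelocity_neg _) (fun κ ↦ by simp only [Real.cos_neg, dispersion_neg]) (drift ρ ν α β) ξ
    (π / 2)
  rw [integral_densV_smul hρ ν α β fun y ↦ Complex.exp (ξ * y * I), Complex.real_smul,
    Complex.ofReal_inv]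
  simp only [Complex.real_smul]
  rw [← hsymm]
  simp only [inner_walkAxisCLM hρ, norm_initial hαβ, Complex.ofReal_one, one_pow, mul_one,
    mul_neg, sub_neg_eq_add]

lemma integral_densV (hρ : ρ ∈ Set.Ioo (0 : ℝ) 1) (ν : ℝ) (α β : ℂ) :
    ∫ y, densV ρ ν α β y = 1 := by
  have hv := continuous_groupVelocity (abs_rz_lt_one hρ)
  have hodd : ∫ κ in (-(π / 2))..(π / 2), groupVelocity (rz ρ) κ = 0 :=
    integral_symm_eq_zero_of_odd (groupVelocity_neg _) _
  have h := integral_densV_smul hρ ν α β fun _ ↦ (1 : ℝ)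
  simp only [smul_eq_mul, mul_one] at h
  rw [h, intervalIntegral.integral_add (Continuous.intervalIntegrable (by fun_prop) _ _)
      (Continuous.intervalIntegrable (by fun_prop) _ _),
    intervalIntegral.integral_const_mul, hodd]
  simp

end Density

section Limit

variable {ρ : ℝ}

lemma tendsto_sum_cprob_mul_exp (hρ : ρ ∈ Set.Ioo (0 : ℝ) 1) (ν : ℝ) {α β : ℂ}
    (hαβ : ‖α‖ ^ 2 + ‖β‖ ^ 2 = 1) (ξ : ℝ) :
    Tendsto (fun t : ℕ ↦ ∑ x ∈ Finset.Icc (-(t : ℤ)) t,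
        (cprob ρ ν α β t x : ℂ) * Complex.exp (ξ * (x / t : ℝ) * I))
      atTop (𝓝 (∫ y, densV ρ ν α β y • Complex.exp (ξ * y * I))) := by
  have hscale : Tendsto (fun t : ℕ ↦ 2 * (t : ℝ)) atTop atTop :=
    tendsto_natCast_atTop_atTop.const_mul_atTop two_pos
  have hint := (tendsto_integral_inner_cis_apply (star_walkAxisCLM ρ ν) (walkAxisCLM_mul_self hρ ν)
    (hasDerivAt_dispersion (abs_rz_lt_one hρ)) (continuous_walkAxisCLM_apply hρ ν !₂[α, β]) ξ
    (-(π / 2)) (π / 2)).comp hscale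
  rw [integral_densV_smul_exp hρ ν hαβ]
  refine (hint.const_mul (π : ℂ)⁻¹).congr fun t ↦ ?_
  rw [Function.comp_apply, ← sum_cprob_mul_exp hρ]
  refine Finset.sum_congr rfl fun x _ ↦ ?_
  congr 2
  push_cast
  field

/-- The law of `X_t / t` (a point mass at `0` when `t = 0`). -/
def positionLaw (ρ ν : ℝ) (α β : ℂ) (t : ℕ) : Measure ℝ :=
  discreteLaw (Finset.Icc (-(t : ℤ)) t) (cprob ρ ν α β t) fun x ↦ (x / t : ℝ)

/-- The limit law, with Lebesgue density `densV`. -/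
def limitLaw (ρ ν : ℝ) (α β : ℂ) : Measure ℝ :=
  volume.withDensity fun y ↦ ENNReal.ofReal (densV ρ ν α β y)

lemma cprob_nonneg (ρ ν : ℝ) (α β : ℂ) (t : ℕ) (x : ℤ) : 0 ≤ cprob ρ ν α β t x := by
  unfold cprob
  positivity

lemma isProbabilityMeasure_positionLaw (hρ : ρ ∈ Set.Ioo (0 : ℝ) 1) (ν : ℝ) {α β : ℂ}
    (hαβ : ‖α‖ ^ 2 + ‖β‖ ^ 2 = 1) (t : ℕ) : IsProbabilityMeasure (positionLaw ρ ν α β t) :=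
  isProbabilityMeasure_discreteLaw (fun x _ ↦ cprob_nonneg ρ ν α β t x) (sum_cprob hρ ν hαβ t) _

lemma isProbabilityMeasure_limitLaw (hρ : ρ ∈ Set.Ioo (0 : ℝ) 1) (ν : ℝ) {α β : ℂ}
    (hαβ : ‖α‖ ^ 2 + ‖β‖ ^ 2 = 1) : IsProbabilityMeasure (limitLaw ρ ν α β) :=
  isProbabilityMeasure_withDensity_ofReal (integrable_densV hρ ν α β) (densV_nonneg hρ ν hαβ)
    (integral_densV hρ ν α β)

instance nullSingletonClass_limitLaw (ρ ν : ℝ) (α β : ℂ) : NullSingletonClass (limitLaw ρ ν α β) :=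
  inferInstanceAs (NullSingletonClass (volume.withDensity _))

lemma tendsto_charFun_positionLaw (hρ : ρ ∈ Set.Ioo (0 : ℝ) 1) (ν : ℝ) {α β : ℂ}
    (hαβ : ‖α‖ ^ 2 + ‖β‖ ^ 2 = 1) (ξ : ℝ) :
    Tendsto (fun t ↦ charFun (positionLaw ρ ν α β t) ξ) atTop
      (𝓝 (charFun (limitLaw ρ ν α β) ξ)) := by
  have hmeas : AEMeasurable (densV ρ ν α β) := (integrable_densV hρ ν α β).aemeasurable
  simp only [charFun_apply_real, positionLaw, limitLaw,
    integral_discreteLaw fun x _ ↦ cprob_nonneg ρ ν α β _ x,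
    integral_withDensity_ofReal hmeas (densV_nonneg hρ ν hαβ)]
  exact tendsto_sum_cprob_mul_exp hρ ν hαβ ξ

lemma measureReal_positionLaw_Iic (ρ ν : ℝ) (α β : ℂ) {t : ℕ} (ht : 0 < t) (x : ℝ) :
    (positionLaw ρ ν α β t).real (Set.Iic x)
      = ∑' y : ℤ, if (y : ℝ) ≤ x * t then cprob ρ ν α β t y else 0 := by
  have ht' : (0 : ℝ) < t := Nat.cast_pos.2 ht
  rw [positionLaw, measureReal_discreteLaw (fun x _ ↦ cprob_nonneg ρ ν α β t x) _ measurableSet_Iic,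
    tsum_eq_sum (s := Finset.Icc (-(t : ℤ)) t)]
  · simp only [Set.indicator_apply, Set.mem_Iic, div_le_iff₀ ht']
  · intro y hy
    rw [cprob_eq_norm_amplitude_sq, amplitude_eq_zero ρ ν α β hy, norm_zero, zero_pow two_ne_zero,
      ite_self]

end Limit

/-- the walk driven by `V` alone converges in distribution to the coined-walk
density `g`. -/
theorem stmt2 (ρ ν : ℝ) (hρ : ρ ∈ Set.Ioo (0 : ℝ) 1)
    (α β : ℂ) (hαβ : ‖α‖ ^ 2 + ‖β‖ ^ 2 = 1) (x : ℝ) :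
    Tendsto (fun t : ℕ => ∑' y : ℤ, if (y : ℝ) ≤ x * t then cprob ρ ν α β t y else 0)
      atTop (𝓝 (∫ y in Set.Iic x, densV ρ ν α β y)) := by
  have hprob := isProbabilityMeasure_positionLaw hρ ν hαβ
  have hprob_limit := isProbabilityMeasure_limitLaw hρ ν hαβ
  have hcdf := tendsto_measureReal_Iic_of_tendsto_charFun (tendsto_charFun_positionLaw hρ ν hαβ) x
  have hmeas : AEMeasurable (densV ρ ν α β) := (integrable_densV hρ ν α β).aemeasurable
  rw [limitLaw, measureReal_withDensity_ofReal hmeas (densV_nonneg hρ ν hαβ) measurableSet_Iic]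
    at hcdf
  refine hcdf.congr' ?_
  filter_upwards [eventually_gt_atTop 0] with t ht
  exact measureReal_positionLaw_Iic ρ ν α β ht x

end
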